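/- ∫_0^{π/2} t²·log(cos t) dt = −(π³/24)·log 2 − (π/4)·ζ(3). -/

import Mathlib

open Real

lemma aux_int (n : ℕ) (hn : n ≠ 0) :
    (∫ t in (0:ℝ)..(π/2), t^2 * Real.cos (2 * n * t)) = π * (-1)^n / (4 * (n:ℝ)^2) := by
  have hn' : (n:ℝ) ≠ 0 := by exact_mod_cast hn
  have h : ∀ t ∈ Set.uIcc (0:ℝ) (π/2), HasDerivAt
      (fun t : ℝ => t^2 * Real.sin (2 * n * t) / (2 * n) + t * Real.cos (2 * n * t) / (2 * (n:ℝ)^2)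
        - Real.sin (2 * n * t) / (4 * (n:ℝ)^3)) (t^2 * Real.cos (2 * n * t)) t := by
    intro t _
    have hl : HasDerivAt (fun t : ℝ => 2 * (n:ℝ) * t) (2 * n) t := by
      simpa using (hasDerivAt_id t).const_mul (2 * (n:ℝ))
    have hs := hl.sin
    have hc := hl.cos
    have h2 : HasDerivAt (fun t : ℝ => t^2) (2 * t) t := by simpa using hasDerivAt_pow 2 t
    have h3 := (((h2.mul hs).div_const (2 * (n:ℝ))).add
      (((hasDerivAt_id t).mul hc).div_const (2 * (n:ℝ)^2))).sub (hs.div_const (4 * (n:ℝ)^3))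
    refine h3.congr_deriv ?_
    simp only [id]
    field_simp
    ring
  rw [intervalIntegral.integral_eq_sub_of_hasDerivAt h
    (Continuous.intervalIntegrable (by fun_prop) _ _)]
  have e : 2 * (n:ℝ) * (π/2) = n * π := by ring
  rw [e, Real.sin_nat_mul_pi, Real.cos_nat_mul_pi]
  simp
  field_simp
  ring

lemma aux_log {r : ℝ} (h0 : 0 < r) (h1 : r < 1) (t : ℝ) :
    HasSum (fun n : ℕ => (-r)^n / n * Real.cos (2 * n * t))
      (-(Real.log ((1-r)^2 + 4 * r * Real.cos t ^ 2) / 2)) := by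
  set z : ℂ := (-r : ℝ) * Complex.exp ((2 * t : ℝ) * Complex.I) with hz
  have hzn : ‖z‖ < 1 := by
    rw [hz, norm_mul, Complex.norm_exp_ofReal_mul_I, Complex.norm_real]
    simpa [abs_of_pos h0] using h1
  have h := Complex.hasSum_re (Complex.hasSum_taylorSeries_neg_log hzn)
  have hre : (-Complex.log (1 - z)).re = -(Real.log ((1-r)^2 + 4 * r * Real.cos t ^ 2) / 2) := by
    rw [Complex.neg_re, Complex.log_re]
    have : (1-r)^2 + 4 * r * Real.cos t ^ 2 = ‖1 - z‖^2 := by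
      rw [← Complex.normSq_eq_norm_sq, Complex.normSq_apply, hz]
      simp only [Complex.sub_re, Complex.sub_im, Complex.re_ofReal_mul, Complex.im_ofReal_mul,
        Complex.exp_ofReal_mul_I_re, Complex.exp_ofReal_mul_I_im, Complex.one_re, Complex.one_im]
      have := Real.sin_sq_add_cos_sq (2*t)
      have h2 := Real.cos_two_mul t
      have h3 : Real.cos t ^ 2 = (1 + Real.cos (2*t)) / 2 := by linarith
      rw [h3]
      linear_combination (-r^2) * this
    rw [this, Real.log_pow]
    push_cast
    ring
  rw [hre] at h
  convert h using 2 with n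
  have : z ^ n / n = (((-r)^n / n : ℝ) : ℂ) * Complex.exp ((2 * n * t : ℝ) * Complex.I) := by
    rw [hz, mul_pow, ← Complex.exp_nat_mul]
    push_cast
    rw [show (n:ℂ) * (2 * t * Complex.I) = 2 * n * t * Complex.I by ring]
    ring
  rw [this, Complex.re_ofReal_mul, Complex.exp_ofReal_mul_I_re]

lemma aux_r {r : ℝ} (h0 : 0 < r) (h1 : r < 1) :
    (∫ t in (0:ℝ)..(π/2), t^2 * (-(Real.log ((1-r)^2 + 4 * r * Real.cos t ^ 2) / 2))) =
      ∑' n : ℕ, (π/4) * (r^n * (1 / (n:ℝ)^3)) := by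
  have hs : HasSum (fun n : ℕ => ∫ t in (0:ℝ)..(π/2), t^2 * ((-r)^n / n * Real.cos (2 * n * t)))
      (∫ t in (0:ℝ)..(π/2), t^2 * (-(Real.log ((1-r)^2 + 4 * r * Real.cos t ^ 2) / 2))) := by
    refine intervalIntegral.hasSum_integral_of_dominated_convergence
      (fun n _ => (π/2)^2 * r^n) ?_ ?_ ?_ ?_ ?_
    · intro n
      exact Continuous.aestronglyMeasurable (by fun_prop)
    · intro n
      refine Filter.Eventually.of_forall fun t ht => ?_
      rw [Set.uIoc_of_le (by positivity)] at ht
      rw [norm_mul, norm_mul, norm_div, norm_pow, norm_pow, norm_neg, Real.norm_of_nonneg ht.1.le,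
        Real.norm_of_nonneg h0.le]
      have hb : r^n / ‖(n:ℝ)‖ ≤ r^n := by
        rcases Nat.eq_zero_or_pos n with rfl | hn
        · simp
        · refine div_le_self (by positivity) ?_
          simpa using (by exact_mod_cast hn : 1 ≤ n)
      have hc : ‖Real.cos (2 * n * t)‖ ≤ 1 := Real.abs_cos_le_one _
      have ht2 : t^2 ≤ (π/2)^2 := pow_le_pow_left₀ ht.1.le ht.2 2
      have : r^n / ‖(n:ℝ)‖ * ‖Real.cos (2 * n * t)‖ ≤ r^n * 1 := by gcongr
      rw [mul_one] at this
      gcongr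
    · exact Filter.Eventually.of_forall fun t _ =>
        (summable_geometric_of_lt_one h0.le h1).mul_left _
    · exact intervalIntegrable_const
    · exact Filter.Eventually.of_forall fun t _ => (aux_log h0 h1 t).mul_left _
  rw [← hs.tsum_eq]
  congr 1
  ext n
  rcases Nat.eq_zero_or_pos n with rfl | hn
  · simp
  · have : ∀ t : ℝ, t^2 * ((-r)^n / n * Real.cos (2 * n * t))
      = ((-r)^n / n) * (t^2 * Real.cos (2 * n * t)) := fun t => by ring
    simp_rw [this]
    rw [intervalIntegral.integral_const_mul, aux_int n hn.ne']
    have hn' : (n:ℝ) ≠ 0 := by exact_mod_cast hn.ne'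
    have : (-r)^n * (-1)^n = r^n := by rw [← mul_pow]; simp
    field_simp
    linear_combination this

lemma aux_cos_int : IntervalIntegrable (fun t => Real.log (Real.cos t)) MeasureTheory.volume 0 (π/2) := by
  have h : IntervalIntegrable (fun t => Real.log (Real.sin t)) MeasureTheory.volume (π/2) 0 :=
    intervalIntegrable_log_sin
  have := h.comp_sub_left (π/2)
  simpa [Real.sin_pi_div_two_sub] using this

lemma aux_lim :
    Filter.Tendsto (fun r : ℝ => ∫ t in (0:ℝ)..(π/2),
      t^2 * (-(Real.log ((1-r)^2 + 4 * r * Real.cos t ^ 2) / 2))) (nhdsWithin 1 (Set.Iio 1))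
      (nhds (∫ t in (0:ℝ)..(π/2), t^2 * (-(Real.log 2 + Real.log (Real.cos t))))) := by
  have hev : ∀ᶠ r : ℝ in nhdsWithin 1 (Set.Iio 1), 1/4 < r ∧ r < 1 := by
    have := Ioo_mem_nhdsLT (show (1/4:ℝ) < 1 by norm_num)
    exact this
  have hne : ∀ᵐ t : ℝ, t ≠ π/2 := by
    simp [MeasureTheory.ae_iff]
  refine intervalIntegral.tendsto_integral_filter_of_dominated_convergence
    (fun t => (π/2)^2 * (Real.log 2 + -Real.log (Real.cos t))) ?_ ?_ ?_ ?_
  · filter_upwards [hev] with r hr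
    exact Measurable.aestronglyMeasurable (by fun_prop)
  · filter_upwards [hev] with r hr
    filter_upwards [hne] with t htne ht
    rw [Set.uIoc_of_le (by positivity)] at ht
    have hc : 0 < Real.cos t := Real.cos_pos_of_mem_Ioo
      ⟨by linarith [ht.1, Real.pi_pos], lt_of_le_of_ne ht.2 htne⟩
    have hc1 := Real.cos_le_one t
    set c := Real.cos t
    have hlo : c^2 ≤ (1-r)^2 + 4 * r * c^2 := by nlinarith [sq_nonneg (1-r), sq_nonneg c]
    have hhi : (1-r)^2 + 4 * r * c^2 ≤ 2^2 := by
      have : c^2 ≤ 1 := by nlinarith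
      nlinarith [hr.1, hr.2]
    have hcp : 0 < c^2 := by positivity
    have l1 := Real.log_le_log hcp hlo
    have l2 := Real.log_le_log (hcp.trans_le hlo) hhi
    rw [Real.log_pow] at l1 l2
    push_cast at l1 l2
    have l3 := Real.log_nonpos hc.le hc1
    have l4 : 0 < Real.log 2 := Real.log_pos (by norm_num)
    rw [norm_mul, norm_pow, Real.norm_of_nonneg ht.1.le]
    have ht2 : t^2 ≤ (π/2)^2 := pow_le_pow_left₀ ht.1.le ht.2 2
    have : ‖-(Real.log ((1-r)^2 + 4 * r * c^2) / 2)‖ ≤ Real.log 2 + -Real.log c := by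
      rw [Real.norm_eq_abs, abs_le]
      constructor <;> linarith
    gcongr
  · exact (intervalIntegrable_const.add aux_cos_int.neg).const_mul _
  · filter_upwards [hne] with t htne ht
    rw [Set.uIoc_of_le (by positivity)] at ht
    have hc : 0 < Real.cos t := Real.cos_pos_of_mem_Ioo
      ⟨by linarith [ht.1, Real.pi_pos], lt_of_le_of_ne ht.2 htne⟩
    have hcont : ContinuousAt (fun r : ℝ =>
        t^2 * (-(Real.log ((1-r)^2 + 4 * r * Real.cos t ^ 2) / 2))) 1 := by
      have : (1-(1:ℝ))^2 + 4 * 1 * Real.cos t ^ 2 ≠ 0 := by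
        have : 0 < Real.cos t ^ 2 := by positivity
        norm_num
        exact hc.ne'
      have h2 : ContinuousAt (fun r : ℝ => Real.log ((1-r)^2 + 4 * r * Real.cos t ^ 2)) 1 :=
        ContinuousAt.log (by fun_prop) this
      fun_prop
    have h := hcont.tendsto.mono_left (nhdsWithin_le_nhds (s := Set.Iio 1))
    convert h using 2
    have : (1-(1:ℝ))^2 + 4 * 1 * Real.cos t ^ 2 = (2 * Real.cos t)^2 := by ring
    rw [this, Real.log_pow, Real.log_mul two_ne_zero hc.ne']
    push_cast
    ring

lemma aux_lim2 :
    Filter.Tendsto (fun r : ℝ => ∑' n : ℕ, (π/4) * (r^n * (1 / (n:ℝ)^3)))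
      (nhdsWithin 1 (Set.Iio 1)) (nhds (∑' n : ℕ, (π/4) * (1 / (n:ℝ)^3))) := by
  have hev : ∀ᶠ r : ℝ in nhdsWithin 1 (Set.Iio 1), 1/4 < r ∧ r < 1 :=
    Ioo_mem_nhdsLT (show (1/4:ℝ) < 1 by norm_num)
  have hsum : Summable (fun n : ℕ => 1 / (n:ℝ)^3) := Real.summable_one_div_nat_pow.2 (by norm_num)
  refine tendsto_tsum_of_dominated_convergence (hsum.mul_left (π/4)) ?_ ?_
  · intro n
    have hcont : ContinuousAt (fun r : ℝ => (π/4) * (r^n * (1 / (n:ℝ)^3))) 1 := by fun_prop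
    have h := hcont.tendsto.mono_left (nhdsWithin_le_nhds (s := Set.Iio 1))
    simpa using h
  · filter_upwards [hev] with r hr n
    have h0 : 0 < r := by linarith [hr.1]
    rw [Real.norm_of_nonneg (by positivity)]
    have : r^n ≤ 1 := pow_le_one₀ h0.le hr.2.le
    have h3 : r^n * (1 / (n:ℝ)^3) ≤ 1 * (1 / (n:ℝ)^3) := by gcongr
    rw [one_mul] at h3
    gcongr

theorem stmt13 :
    (∫ t in (0:ℝ)..(π/2), t^2 * Real.log (Real.cos t)) =
      -(π^3/24) * Real.log 2 - (π/4) * ∑' k : ℕ, 1 / ((k:ℝ)+1)^3 := by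
  have hsum : Summable (fun n : ℕ => 1 / (n:ℝ)^3) := Real.summable_one_div_nat_pow.2 (by norm_num)
  have hev : ∀ᶠ r : ℝ in nhdsWithin 1 (Set.Iio 1), 1/4 < r ∧ r < 1 :=
    Ioo_mem_nhdsLT (show (1/4:ℝ) < 1 by norm_num)
  have key := tendsto_nhds_unique (aux_lim.congr' (by
    filter_upwards [hev] with r hr
    exact aux_r (by linarith [hr.1]) hr.2)) aux_lim2
  have hI : IntervalIntegrable (fun t => t^2 * Real.log (Real.cos t))
      MeasureTheory.volume 0 (π/2) :=
    aux_cos_int.continuousOn_mul (by fun_prop)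
  have e : ∀ t : ℝ, t^2 * (-(Real.log 2 + Real.log (Real.cos t)))
      = (-Real.log 2) * t^2 - t^2 * Real.log (Real.cos t) := fun t => by ring
  simp_rw [e] at key
  rw [intervalIntegral.integral_sub (Continuous.intervalIntegrable (by fun_prop) _ _) hI,
    intervalIntegral.integral_const_mul, integral_pow, tsum_mul_left,
    hsum.tsum_eq_zero_add] at key
  push_cast at key
  norm_num at key ⊢
  linear_combination -key
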